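/- Let d ≥ 1, let s_min ≤ s_max be real numbers, and let z, z' ∈ ℝ^d satisfy s_min ≤ z_j ≤ s_max and s_min ≤ z'_j ≤ s_max for all j. Let p = exp(z)/⟨1, exp(z)⟩ and p' = exp(z')/⟨1, exp(z')⟩ be the normalized coordinatewise exponentials (softmax vectors). Then ‖p − p'‖₁ ≤ (2 e^{s_max} / e^{s_min}) · ‖z − z'‖₁. -/

import Mathlib

/-- Normalization of a vector to a probability vector: `x / ⟨1, x⟩`. -/
noncomputable def normalizeVec {d : ℕ} (x : Fin d → ℝ) : Fin d → ℝ :=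
  fun j => x j / ∑ k, x k

/-- The softmax vector of `z`: the normalized coordinatewise exponential. -/
noncomputable def softmaxVec {d : ℕ} (z : Fin d → ℝ) : Fin d → ℝ :=
  normalizeVec fun j => Real.exp (z j)

/-!
Let `X` and `Y` be the coordinate sums of `x` and `y`. Since
`x / X - y / Y = ((x - y) + (Y - X) • (y / Y)) / X` and `|Y - X| ≤ ‖x - y‖₁`, the normalizations of
`x` and `y` are within `2 ‖x - y‖₁ / X` of each other in `ℓ1`. For `x = exp z` and `y = exp z'`
with, by symmetry, `Y ≤ X`, the mean value bound `|x_j - y_j| ≤ max (x_j, y_j) |z_j - z'_j|` has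
`max (x_j, y_j) ≤ X`. The normalizing sum thus absorbs the Lipschitz constant of `exp`, and softmax
is globally `2`-Lipschitz in `ℓ1`; finally `1 ≤ e^{s_max} / e^{s_min}`.
-/

lemma abs_exp_sub_exp_le (a b : ℝ) :
    |Real.exp a - Real.exp b| ≤ max (Real.exp a) (Real.exp b) * |a - b| := by
  wlog hba : b ≤ a generalizing a b
  · rw [abs_sub_comm, max_comm, abs_sub_comm a b]
    exact this b a (le_of_not_ge hba)
  have hexp : Real.exp b ≤ Real.exp a := Real.exp_le_exp.mpr hba
  rw [max_eq_left hexp, abs_of_nonneg (sub_nonneg.mpr hexp), abs_of_nonneg (sub_nonneg.mpr hba)]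
  calc Real.exp a - Real.exp b
      = Real.exp a * (1 - Real.exp (-(a - b))) := by
        rw [mul_sub, mul_one, ← Real.exp_add, neg_sub, add_sub_cancel]
    _ ≤ Real.exp a * (a - b) :=
        mul_le_mul_of_nonneg_left (sub_le_comm.mp (Real.one_sub_le_exp_neg (a - b)))
          (Real.exp_pos a).le

section Normalization

variable {d : ℕ} {x y : Fin d → ℝ}

lemma normalizeVec_nonneg (hx : ∀ j, 0 ≤ x j) (j : Fin d) : 0 ≤ normalizeVec x j :=
  div_nonneg (hx j) (Finset.sum_nonneg fun k _ => hx k)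

lemma sum_normalizeVec (hx : ∑ j, x j ≠ 0) : ∑ j, normalizeVec x j = 1 := by
  simp only [normalizeVec, ← Finset.sum_div, div_self hx]

lemma normalizeVec_sub_normalizeVec (hx : ∑ j, x j ≠ 0) (hy : ∑ j, y j ≠ 0) (j : Fin d) :
    normalizeVec x j - normalizeVec y j =
      ((x j - y j) + (∑ k, y k - ∑ k, x k) * normalizeVec y j) / ∑ k, x k := by
  simp only [normalizeVec]
  field_simp
  ring

lemma sum_abs_normalizeVec_sub_le (hx : 0 < ∑ j, x j) (hy : ∀ j, 0 ≤ y j)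
    (hy_sum : ∑ j, y j ≠ 0) :
    ∑ j, |normalizeVec x j - normalizeVec y j| ≤ 2 * (∑ j, |x j - y j|) / ∑ j, x j := by
  have hmass : |∑ j, y j - ∑ j, x j| ≤ ∑ j, |x j - y j| := by
    rw [abs_sub_comm, ← Finset.sum_sub_distrib]
    exact Finset.abs_sum_le_sum_abs _ _
  have hcoord (j : Fin d) : |normalizeVec x j - normalizeVec y j| ≤
      (|x j - y j| + |∑ k, y k - ∑ k, x k| * normalizeVec y j) / ∑ k, x k := by
    rw [normalizeVec_sub_normalizeVec hx.ne' hy_sum, abs_div, abs_of_pos hx]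
    gcongr
    refine (abs_add_le _ _).trans_eq ?_
    rw [abs_mul, abs_of_nonneg (normalizeVec_nonneg hy j)]
  calc ∑ j, |normalizeVec x j - normalizeVec y j|
      ≤ ∑ j, (|x j - y j| + |∑ k, y k - ∑ k, x k| * normalizeVec y j) / ∑ k, x k :=
        Finset.sum_le_sum fun j _ => hcoord j
    _ = (∑ j, |x j - y j| + |∑ k, y k - ∑ k, x k|) / ∑ k, x k := by
        rw [← Finset.sum_div, Finset.sum_add_distrib, ← Finset.mul_sum, sum_normalizeVec hy_sum,
          mul_one]
    _ ≤ 2 * (∑ j, |x j - y j|) / ∑ j, x j := by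
        rw [two_mul]
        gcongr

end Normalization

theorem softmax_lipschitz_l1_general {d : ℕ} (z z' : Fin d → ℝ) :
    ∑ j, |softmaxVec z j - softmaxVec z' j| ≤ 2 * ∑ j, |z j - z' j| := by
  obtain hd | hd := isEmpty_or_nonempty (Fin d)
  · simp only [Finset.univ_eq_empty, Finset.sum_empty, mul_zero, le_refl]
  wlog hle : ∑ j, Real.exp (z' j) ≤ ∑ j, Real.exp (z j) generalizing z z'
  · simp only [abs_sub_comm (softmaxVec z _), abs_sub_comm (z _)]
    exact this z' z (le_of_not_ge hle)
  have hsum_pos (w : Fin d → ℝ) : 0 < ∑ j, Real.exp (w j) :=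
    Finset.sum_pos (fun j _ => Real.exp_pos (w j)) Finset.univ_nonempty
  have hle_sum (w : Fin d → ℝ) (j : Fin d) : Real.exp (w j) ≤ ∑ k, Real.exp (w k) :=
    Finset.single_le_sum (f := fun k => Real.exp (w k)) (fun k _ => (Real.exp_pos _).le)
      (Finset.mem_univ j)
  have hexp : ∑ j, |Real.exp (z j) - Real.exp (z' j)| ≤
      (∑ j, Real.exp (z j)) * ∑ j, |z j - z' j| := by
    rw [Finset.mul_sum]
    gcongr with j
    refine (abs_exp_sub_exp_le (z j) (z' j)).trans ?_
    gcongr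
    exact max_le (hle_sum z j) ((hle_sum z' j).trans hle)
  calc ∑ j, |softmaxVec z j - softmaxVec z' j|
      ≤ 2 * (∑ j, |Real.exp (z j) - Real.exp (z' j)|) / ∑ j, Real.exp (z j) :=
        sum_abs_normalizeVec_sub_le (hsum_pos z) (fun j => (Real.exp_pos (z' j)).le)
          (hsum_pos z').ne'
    _ ≤ 2 * ∑ j, |z j - z' j| := by
        rw [div_le_iff₀' (hsum_pos z), mul_left_comm]
        gcongr

/-- One-step perturbation bound through `exp` and normalization: on the box
`s_min ≤ z_j ≤ s_max`, the softmax map is `(2 e^{s_max} / e^{s_min})`-Lipschitz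
from `ℓ1` to `ℓ1`. -/
theorem softmax_lipschitz_l1 {d : ℕ} (hd : 1 ≤ d) (smin smax : ℝ)
    (hrange : smin ≤ smax) (z z' : Fin d → ℝ)
    (hz : ∀ j, smin ≤ z j ∧ z j ≤ smax) (hz' : ∀ j, smin ≤ z' j ∧ z' j ≤ smax) :
    ∑ j, |softmaxVec z j - softmaxVec z' j| ≤
      (2 * Real.exp smax / Real.exp smin) * ∑ j, |z j - z' j| := by
  have hratio : 2 ≤ 2 * Real.exp smax / Real.exp smin := by
    rw [le_div_iff₀ (Real.exp_pos smin)]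
    gcongr
  exact (softmax_lipschitz_l1_general z z').trans (by gcongr)
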